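/- arXiv:math/0306066 — 2 statements merged into one kernel-verified Lean document; each statement's English description precedes it below -/
import Mathlib

section
/- Let n, c, d be positive integers with d < c ≤ n. Let a_1, …, a_c be real numbers with a_1 ≥ 1 and a_i ≥ n + 1 for all i with 2 ≤ i ≤ c. Then e_d(a_1,…,a_c) > e_{d−1}(a_1,…,a_c). -/
/-!
Among `m` numbers that are all at least `B`, every `k`-subset extends to a `(k + 1)`-subset in
`m - k` ways, and every `(k + 1)`-subset arises `k + 1` times. Hence
`(m - k) B e_k ≤ (k + 1) e_{k+1}`, and `e_k < e_{k+1}` as soon as `k + 1 < (m - k) B`.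
Adjoining one further number `x ≥ 0` replaces `e_k` by `e_k + x e_{k-1}`, so it preserves the
strict inequality at `k` because the weak one holds at `k - 1`.
-/

open Finset

section CommSemiring

variable {ι R : Type*} [CommSemiring R]

theorem esymm_zero (m : Multiset R) : m.esymm 0 = 1 := by
  simp [Multiset.esymm]

theorem esymm_cons_succ (x : R) (m : Multiset R) (k : ℕ) :
    (x ::ₘ m).esymm (k + 1) = m.esymm (k + 1) + x * m.esymm k := by
  simp [Multiset.esymm, Multiset.powersetCard_cons, Multiset.sum_map_mul_left]

theorem succ_mul_esymm_succ [DecidableEq ι] (s : Finset ι) (a : ι → R) (k : ℕ) :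
    (k + 1) * (s.val.map a).esymm (k + 1)
      = ∑ S ∈ s.powersetCard k, (∑ i ∈ s \ S, a i) * ∏ i ∈ S, a i := by
  have hcard : ∀ T ∈ s.powersetCard (k + 1), (k + 1) * ∏ i ∈ T, a i = ∑ _i ∈ T, ∏ i ∈ T, a i := by
    intro T hT
    rw [sum_const, (mem_powersetCard.1 hT).2, nsmul_eq_mul, Nat.cast_succ]
  rw [esymm_map_val, mul_sum, sum_congr rfl hcard]
  simp only [sum_mul, sum_sigma']
  refine sum_bij' (fun p _ => ⟨p.1.erase p.2, p.2⟩) (fun q _ => ⟨insert q.2 q.1, q.2⟩)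
    ?_ ?_ ?_ ?_ ?_
  · rintro ⟨T, i⟩ hp
    simp only [mem_sigma, mem_powersetCard, mem_sdiff] at hp ⊢
    grind
  · rintro ⟨S, i⟩ hq
    simp only [mem_sigma, mem_powersetCard, mem_sdiff] at hq ⊢
    grind
  · rintro ⟨T, i⟩ hp
    simp only [insert_erase (mem_sigma.1 hp).2]
  · rintro ⟨S, i⟩ hq
    simp only [erase_insert (mem_sdiff.1 (mem_sigma.1 hq).2).2]
  · rintro ⟨T, i⟩ hp
    exact (mul_prod_erase T a (mem_sigma.1 hp).2).symm

end CommSemiring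

section Ordered

variable {ι R : Type*} [CommSemiring R] {s : Finset ι} {a : ι → R} {B : R} {k : ℕ}

theorem esymm_pos [PartialOrder R] [IsStrictOrderedRing R] (ha : ∀ i ∈ s, 0 < a i)
    (hk : k ≤ #s) : 0 < (s.val.map a).esymm k := by
  rw [esymm_map_val]
  exact sum_pos (fun S hS => prod_pos fun i hi => ha i ((mem_powersetCard.1 hS).1 hi))
    (powersetCard_nonempty.2 hk)

theorem card_sub_mul_esymm_le [PartialOrder R] [IsOrderedRing R] (hB : 0 ≤ B)
    (ha : ∀ i ∈ s, B ≤ a i) (k : ℕ) :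
    (#s - k : ℕ) * B * (s.val.map a).esymm k ≤ (k + 1) * (s.val.map a).esymm (k + 1) := by
  classical
  rw [succ_mul_esymm_succ, esymm_map_val, mul_sum]
  refine sum_le_sum fun S hS => ?_
  obtain ⟨hSs, hSk⟩ := mem_powersetCard.1 hS
  have hprod : 0 ≤ ∏ i ∈ S, a i := prod_nonneg fun i hi => hB.trans (ha i (hSs hi))
  have hsum : (#s - k : ℕ) * B ≤ ∑ i ∈ s \ S, a i := by
    rw [← hSk, ← card_sdiff_of_subset hSs, ← nsmul_eq_mul]
    exact card_nsmul_le_sum _ _ _ fun i hi => ha i (mem_sdiff.1 hi).1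
  exact mul_le_mul_of_nonneg_right hsum hprod

variable [LinearOrder R] [IsStrictOrderedRing R]

theorem esymm_lt_esymm_succ (ha : ∀ i ∈ s, B ≤ a i) (hk : (k + 1 : R) < (#s - k : ℕ) * B) :
    (s.val.map a).esymm k < (s.val.map a).esymm (k + 1) := by
  have hpos : (0 : R) < (#s - k : ℕ) * B := lt_trans (by positivity) hk
  have hB : 0 < B := pos_of_mul_pos_right hpos (Nat.cast_nonneg _)
  have hks : 0 < #s - k := Nat.cast_pos.1 (pos_of_mul_pos_left hpos hB.le)
  have he : 0 < (s.val.map a).esymm k := esymm_pos (fun i hi => hB.trans_le (ha i hi)) (by omega)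
  refine lt_of_mul_lt_mul_left (a := (k + 1 : R)) ?_ (by positivity)
  calc (k + 1) * (s.val.map a).esymm k < (#s - k : ℕ) * B * (s.val.map a).esymm k := by gcongr
    _ ≤ (k + 1) * (s.val.map a).esymm (k + 1) := card_sub_mul_esymm_le hB.le ha k

theorem esymm_cons_lt_esymm_cons_succ {x : R} (hx : 0 ≤ x) (ha : ∀ i ∈ s, B ≤ a i)
    (hk : (k + 1 : R) < (#s - k : ℕ) * B) :
    (x ::ₘ s.val.map a).esymm k < (x ::ₘ s.val.map a).esymm (k + 1) := by
  have hlt : (s.val.map a).esymm k < (s.val.map a).esymm (k + 1) := esymm_lt_esymm_succ ha hk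
  cases k with
  | zero =>
    calc (x ::ₘ s.val.map a).esymm 0 = (s.val.map a).esymm 0 := by rw [esymm_zero, esymm_zero]
      _ < (s.val.map a).esymm 1 + x * (s.val.map a).esymm 0 :=
        lt_add_of_lt_of_nonneg hlt (by rwa [esymm_zero, mul_one])
      _ = (x ::ₘ s.val.map a).esymm 1 := (esymm_cons_succ _ _ _).symm
  | succ k =>
    have hB : 0 < B := pos_of_mul_pos_right (lt_trans (by positivity) hk) (Nat.cast_nonneg _)
    have hk_pred : (k + 1 : R) < (#s - k : ℕ) * B :=
      calc (k + 1 : R) < (k + 1 : ℕ) + 1 := by push_cast; exact lt_add_one _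
        _ < (#s - (k + 1) : ℕ) * B := hk
        _ ≤ (#s - k : ℕ) * B := by gcongr; omega
    rw [esymm_cons_succ, esymm_cons_succ]
    exact add_lt_add_of_lt_of_le hlt
      (mul_le_mul_of_nonneg_left (esymm_lt_esymm_succ ha hk_pred).le hx)

end Ordered

-- The threshold in `hB` is sharp: if `a j = 0` and `a i = B` for `i ≠ j`, then
-- `d * e_d = (#s - d) * B * e_{d-1}`.
theorem stmt2_general {ι R : Type*} [CommSemiring R] [LinearOrder R] [IsStrictOrderedRing R]
    {s : Finset ι} {a : ι → R} {j : ι} (hj : j ∈ s) (haj : 0 ≤ a j) {B : R}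
    (ha : ∀ i ∈ s, i ≠ j → B ≤ a i) {d : ℕ} (hd : 0 < d) (hB : (d : R) < (#s - d : ℕ) * B) :
    (∑ S ∈ s.powersetCard (d - 1), ∏ i ∈ S, a i) < ∑ S ∈ s.powersetCard d, ∏ i ∈ S, a i := by
  classical
  obtain ⟨k, rfl⟩ := Nat.exists_eq_succ_of_ne_zero hd.ne'
  obtain ⟨t, hjt, rfl⟩ : ∃ t, ∃ hjt : j ∉ t, s = cons j t hjt :=
    ⟨s.erase j, notMem_erase j s, by rw [cons_eq_insert, insert_erase hj]⟩
  have hat : ∀ i ∈ t, B ≤ a i := fun i hi =>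
    ha i (mem_cons_of_mem hi) (ne_of_mem_of_not_mem hi hjt)
  rw [card_cons, Nat.succ_eq_add_one, Nat.add_sub_add_right, Nat.cast_succ] at hB
  rw [Nat.succ_eq_add_one, Nat.add_sub_cancel, ← esymm_map_val, ← esymm_map_val, cons_val,
    Multiset.map_cons]
  exact esymm_cons_lt_esymm_cons_succ haj hat hB

/-- Let `n, c, d` be positive integers with `d < c ≤ n`, and let
`a_1, …, a_c` be real numbers with `a_1 ≥ 1` and `a_i ≥ n + 1` for `2 ≤ i ≤ c`.
Then `e_d(a_1,…,a_c) > e_{d-1}(a_1,…,a_c)`, where `e_k` is the `k`-th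
elementary symmetric polynomial. -/
theorem stmt2 (n c d : ℕ) (hn : 0 < n) (hc : 0 < c) (hd : 0 < d)
    (hdc : d < c) (hcn : c ≤ n) (a : Fin c → ℝ)
    (ha1 : 1 ≤ a ⟨0, hc⟩)
    (ha : ∀ i : Fin c, 1 ≤ (i : ℕ) → (n : ℝ) + 1 ≤ a i) :
    (∑ S ∈ Finset.univ.powersetCard (d - 1), ∏ i ∈ S, a i)
      < (∑ S ∈ Finset.univ.powersetCard d, ∏ i ∈ S, a i) := by
  have hB : d < (#(univ : Finset (Fin c)) - d) * (n + 1) := by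
    rw [card_fin]
    exact lt_of_lt_of_le (by omega) (Nat.le_mul_of_pos_left (n + 1) (Nat.sub_pos_of_lt hdc))
  exact stmt2_general (mem_univ _) (zero_le_one.trans ha1)
    (fun i _ hi => ha i (Nat.one_le_iff_ne_zero.2 (Fin.val_ne_of_ne hi))) hd (by exact_mod_cast hB)
end

section
/- Let n and c be integers with n/2 < c < n, and set d = n − c (so 1 ≤ d < c). Let e_1, …, e_c be integers with e_1 ≥ 2 and e_i ≥ n + 2 for 2 ≤ i ≤ c. Then the coefficient of X^d in the polynomial (1 − X) · ∏_{i=1}^{c} (1 + (e_i − 1) X) ∈ ℤ[X] is strictly positive. -/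
open Polynomial

/-!
Write `q = ∏ (1 + aᵢ X)`, with `m` factors, and let `rᵢ` be the product without its `i`-th factor.
Then `q' = ∑ aᵢ rᵢ`, and summing `q = rᵢ + aᵢ X rᵢ` over `i` gives `∑ rᵢ = m q - X q'`, so
`∑ rᵢ` has `k`-th coefficient `(m - k) qₖ`. If all `aᵢ ≥ M ≥ 0`, comparing `k`-th coefficients in
`q' = ∑ aᵢ rᵢ` yields `(m - k) M qₖ ≤ (k + 1) qₖ₊₁`. Hence the coefficients of `q` increase strictly
up to degree `d` as soon as `d < (m + 1 - d) M`, which means that `(1 - X) q` has positive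
coefficients up to degree `d`. Multiplying by further factors `1 + b X` with `b ≥ 0` preserves this.
-/

open Finset

section Identities

variable {R ι : Type*}

theorem coeff_zero_prod_one_add_C_mul_X [CommSemiring R] (s : Finset ι) (a : ι → R) :
    (∏ i ∈ s, (1 + C (a i) * X)).coeff 0 = 1 := by
  simp [coeff_zero_prod]

variable [DecidableEq ι]

theorem sum_mul_coeff_prod_erase [CommSemiring R] (s : Finset ι) (a : ι → R) (k : ℕ) :
    ∑ i ∈ s, a i * (∏ j ∈ s.erase i, (1 + C (a j) * X)).coeff k =
      (k + 1) * (∏ i ∈ s, (1 + C (a i) * X)).coeff (k + 1) := by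
  rw [mul_comm (_ + _), ← coeff_derivative, derivative_prod_finset, finsetSum_coeff]
  refine sum_congr rfl fun i _ => ?_
  rw [derivative_add, derivative_one, zero_add, derivative_C_mul_X, coeff_mul_C, mul_comm]

theorem sum_coeff_prod_erase [CommRing R] (s : Finset ι) (a : ι → R) (k : ℕ) :
    ∑ i ∈ s, (∏ j ∈ s.erase i, (1 + C (a j) * X)).coeff k =
      (#s - k : R) * (∏ i ∈ s, (1 + C (a i) * X)).coeff k := by
  cases k with
  | zero => simp [coeff_zero_prod_one_add_C_mul_X]
  | succ k =>
    have split_factor : ∀ i ∈ s, (∏ j ∈ s, (1 + C (a j) * X)).coeff (k + 1) =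
        (∏ j ∈ s.erase i, (1 + C (a j) * X)).coeff (k + 1) +
          a i * (∏ j ∈ s.erase i, (1 + C (a j) * X)).coeff k := fun i hi => by
      rw [← mul_prod_erase s _ hi, add_mul, one_mul, mul_assoc, coeff_add, coeff_C_mul,
        coeff_X_mul]
    have h := sum_congr rfl split_factor
    rw [sum_const, nsmul_eq_mul, sum_add_distrib, sum_mul_coeff_prod_erase] at h
    push_cast
    linear_combination -h

end Identities

section PartialOrder

variable {R ι : Type*} [PartialOrder R]

theorem coeff_mul_pos [Semiring R] [IsStrictOrderedRing R] {p q : R[X]} {d : ℕ}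
    (hp : ∀ k ≤ d, 0 ≤ p.coeff k) (hpd : 0 < p.coeff d) (hq : ∀ k ≤ d, 0 ≤ q.coeff k)
    (hq0 : 0 < q.coeff 0) : 0 < (p * q).coeff d := by
  rw [coeff_mul]
  refine sum_pos' (fun x hx => ?_) ⟨(d, 0), by simp, mul_pos hpd hq0⟩
  rw [HasAntidiagonal.mem_antidiagonal] at hx
  exact mul_nonneg (hp _ (by omega)) (hq _ (by omega))

theorem coeff_prod_one_add_C_mul_X_nonneg [CommSemiring R] [IsOrderedRing R] {s : Finset ι}
    {a : ι → R} (ha : ∀ i ∈ s, 0 ≤ a i) (k : ℕ) :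
    0 ≤ (∏ i ∈ s, (1 + C (a i) * X)).coeff k := by
  refine prod_induction _ (fun p : R[X] => ∀ k, 0 ≤ p.coeff k) (fun p q hp hq k => ?_)
    (fun k => ?_) (fun i hi k => ?_) k
  · rw [coeff_mul]
    exact sum_nonneg fun x _ => mul_nonneg (hp _) (hq _)
  · rw [coeff_one]
    split_ifs <;> simp
  · rw [coeff_add, coeff_one, coeff_C_mul, coeff_X]
    refine add_nonneg ?_ (mul_nonneg (ha i hi) ?_) <;> split_ifs <;> simp

theorem mul_coeff_le_mul_coeff_succ [CommRing R] [IsOrderedRing R] {s : Finset ι} {a : ι → R}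
    {M : R} (hM : 0 ≤ M) (ha : ∀ i ∈ s, M ≤ a i) (k : ℕ) :
    (#s - k) * M * (∏ i ∈ s, (1 + C (a i) * X)).coeff k ≤
      (k + 1) * (∏ i ∈ s, (1 + C (a i) * X)).coeff (k + 1) := by
  classical
  calc (#s - k) * M * (∏ i ∈ s, (1 + C (a i) * X)).coeff k
      = ∑ i ∈ s, M * (∏ j ∈ s.erase i, (1 + C (a j) * X)).coeff k := by
        rw [← mul_sum, sum_coeff_prod_erase]; ring
    _ ≤ ∑ i ∈ s, a i * (∏ j ∈ s.erase i, (1 + C (a j) * X)).coeff k :=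
        sum_le_sum fun i hi => mul_le_mul_of_nonneg_right (ha i hi) <|
          coeff_prod_one_add_C_mul_X_nonneg
            (fun j hj => hM.trans (ha j (mem_of_mem_erase hj))) k
    _ = (k + 1) * (∏ i ∈ s, (1 + C (a i) * X)).coeff (k + 1) := sum_mul_coeff_prod_erase s a k

end PartialOrder

section LinearOrder

variable {R ι : Type*} [CommRing R] [LinearOrder R] [IsStrictOrderedRing R]

theorem coeff_prod_one_add_C_mul_X_pos {s : Finset ι} {a : ι → R} {M : R} (hM : 0 < M)
    (ha : ∀ i ∈ s, M ≤ a i) {k : ℕ} (hk : k ≤ #s) :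
    0 < (∏ i ∈ s, (1 + C (a i) * X)).coeff k := by
  induction k with
  | zero => simp [coeff_zero_prod_one_add_C_mul_X]
  | succ k ih =>
    have hks : (0 : R) < #s - k := sub_pos.2 (by exact_mod_cast hk)
    exact pos_of_mul_pos_right
      ((mul_pos (mul_pos hks hM) (ih (by omega))).trans_le
        (mul_coeff_le_mul_coeff_succ hM.le ha k))
      (by positivity)

theorem coeff_prod_one_add_C_mul_X_lt_coeff_succ {s : Finset ι} {a : ι → R} {M : R} (hM : 0 < M)
    (ha : ∀ i ∈ s, M ≤ a i) {k : ℕ} (hkM : k + 1 < (#s - k) * M) :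
    (∏ i ∈ s, (1 + C (a i) * X)).coeff k < (∏ i ∈ s, (1 + C (a i) * X)).coeff (k + 1) := by
  have hks : k < #s := by
    have : (0 : R) < #s - k := pos_of_mul_pos_left (lt_trans (by positivity) hkM) hM.le
    exact_mod_cast sub_pos.1 this
  refine lt_of_mul_lt_mul_left (a := (k + 1 : R)) ?_ (by positivity)
  calc (k + 1) * (∏ i ∈ s, (1 + C (a i) * X)).coeff k
      < (#s - k) * M * (∏ i ∈ s, (1 + C (a i) * X)).coeff k :=
        mul_lt_mul_of_pos_right hkM (coeff_prod_one_add_C_mul_X_pos hM ha hks.le)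
    _ ≤ (k + 1) * (∏ i ∈ s, (1 + C (a i) * X)).coeff (k + 1) :=
        mul_coeff_le_mul_coeff_succ hM.le ha k

theorem coeff_one_sub_X_mul_prod_pos {s : Finset ι} {a : ι → R} {M : R} {d : ℕ}
    (ha : ∀ i ∈ s, M ≤ a i) (hd : d ≤ #s) (hdM : d < (#s + 1 - d) * M) {k : ℕ} (hk : k ≤ d) :
    0 < ((1 - X) * ∏ i ∈ s, (1 + C (a i) * X)).coeff k := by
  have hds : (d : R) ≤ #s := by exact_mod_cast hd
  have hM : 0 < M := pos_of_mul_pos_right (d.cast_nonneg.trans_lt hdM) (by linarith)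
  cases k with
  | zero => simp [mul_coeff_zero, coeff_zero_prod_one_add_C_mul_X]
  | succ k =>
    rw [sub_mul, one_mul, coeff_sub, coeff_X_mul, sub_pos]
    refine coeff_prod_one_add_C_mul_X_lt_coeff_succ hM ha ?_
    have hkd : (k + 1 : R) ≤ d := by exact_mod_cast hk
    calc (k + 1 : R) ≤ d := hkd
      _ < (#s + 1 - d) * M := hdM
      _ ≤ (#s - k) * M := mul_le_mul_of_nonneg_right (by linarith) hM.le

theorem stmt3_general {s t : Finset ι} {a : ι → R} {M : R} {d : ℕ} (hst : s ⊆ t)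
    (ha : ∀ i ∈ t, i ∉ s → 0 ≤ a i) (hM : ∀ i ∈ s, M ≤ a i) (hd : d ≤ #s)
    (hdM : d < (#s + 1 - d) * M) :
    0 < ((1 - X) * ∏ i ∈ t, (1 + C (a i) * X)).coeff d := by
  classical
  have hpos : ∀ k ≤ d, 0 < ((1 - X) * ∏ i ∈ s, (1 + C (a i) * X)).coeff k :=
    fun _ => coeff_one_sub_X_mul_prod_pos hM hd hdM
  have hnonneg : ∀ k, 0 ≤ (∏ i ∈ t \ s, (1 + C (a i) * X)).coeff k :=
    coeff_prod_one_add_C_mul_X_nonneg fun i hi => ha i (mem_sdiff.1 hi).1 (mem_sdiff.1 hi).2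
  rw [← prod_sdiff hst, mul_comm (∏ i ∈ t \ s, _), ← mul_assoc]
  refine coeff_mul_pos (fun k hk => (hpos k hk).le) (hpos d le_rfl) (fun k _ => hnonneg k) ?_
  rw [coeff_zero_prod_one_add_C_mul_X]
  exact one_pos

end LinearOrder

/-- Let `n, c` be integers with `n/2 < c < n`, and `d = n - c`. Let
`e_1, …, e_c` be integers with `e_1 ≥ 2` and `e_i ≥ n + 2` for `2 ≤ i ≤ c`.
Then the coefficient of `X^d` in `(1 - X) * ∏ (1 + (e_i - 1) X) ∈ ℤ[X]`
is strictly positive. -/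
theorem stmt3 (n c : ℕ) (h1 : n < 2 * c) (h2 : c < n) (e : Fin c → ℤ)
    (he1 : 2 ≤ e ⟨0, by omega⟩)
    (he : ∀ i : Fin c, 1 ≤ (i : ℕ) → (n : ℤ) + 2 ≤ e i) :
    0 < ((1 - Polynomial.X) *
        ∏ i : Fin c, (1 + Polynomial.C (e i - 1) * Polynomial.X)).coeff (n - c) := by
  have hcard : #({⟨0, by omega⟩}ᶜ : Finset (Fin c)) + 1 = c := by
    rw [card_compl, card_singleton, Fintype.card_fin]
    omega
  refine stmt3_general (M := (n : ℤ) + 1) (subset_univ {⟨0, by omega⟩}ᶜ) (fun i _ hi => ?_)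
    (fun i hi => ?_) (by omega) ?_
  · obtain rfl : i = ⟨0, by omega⟩ := by simpa using hi
    omega
  · have hi0 : (i : ℕ) ≠ 0 := by simpa [Fin.ext_iff] using hi
    have := he i (by omega)
    omega
  · zify at hcard
    rw [hcard]
    have hpos : (1 : ℤ) ≤ c - (n - c : ℕ) := by omega
    calc ((n - c : ℕ) : ℤ) < n + 1 := by omega
      _ ≤ (c - (n - c : ℕ)) * (n + 1) := le_mul_of_one_le_left (by omega) hpos
end
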